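/- Let ℓ ≥ 2, q prime, 0 ≤ γ < q/2, and G the ℓ×ℓ circulant matrix generated by [⌊q/2⌋, γ, 0, ..., 0]. For any m_Δ ∈ {-1,1}^ℓ (full Hamming weight), the toroidal norm of G m_Δ is at least √ℓ·(⌊q/2⌋ - γ), with equality when the signs of m_Δ alternate. -/

import Mathlib

/-- Centered representative of `x` modulo `q`, lying in `[-q/2, q/2)`. -/
def cmod (q x : ℤ) : ℤ := (x + q / 2) % q - q / 2

/-- The `L₂`-norm toroidal distance between integer vectors, modulus `q`. -/
noncomputable def tdistI (q : ℤ) {ℓ : ℕ} (v₁ v₂ : Fin ℓ → ℤ) : ℝ :=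
  Real.sqrt (∑ i, ((cmod q (v₁ i - v₂ i) : ℤ) : ℝ) ^ 2)

/-- Multiplication by the `ℓ × ℓ` circulant matrix generated by `[a, γ, 0, …, 0]`. -/
def minalEnc (ℓ : ℕ) (a γ : ℤ) (m : Fin ℓ → ℤ) : Fin ℓ → ℤ :=
  fun i => a * m i + γ * m (finRotate ℓ i)

theorem cmod_small (q x : ℤ) (h1 : -(q/2) ≤ x) (h2 : x + q/2 < q) : cmod q x = x := by
  unfold cmod
  rw [Int.emod_eq_of_lt (by omega) h2]; ring

theorem cmod_addq (q x : ℤ) : cmod q (x + q) = cmod q x := by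
  unfold cmod
  rw [show x + q + q/2 = x + q/2 + q by ring, Int.add_emod_right]

theorem cmod_subq (q x : ℤ) : cmod q (x - q) = cmod q x := by
  rw [← cmod_addq q (x - q)]; congr 1; ring

theorem cmod_opp (q γ s : ℤ) (hq : q = 2 ∨ q % 2 = 1) (hq1 : 2 ≤ q) (h0 : 0 ≤ γ)
    (h : 2 * γ < q) (hs : s = -1 ∨ s = 1) :
    cmod q (q/2 * s + γ * (-s)) ^ 2 = (q/2 - γ) ^ 2 := by
  rcases hq with rfl | hq
  · obtain rfl : γ = 0 := by omega
    rcases hs with rfl | rfl <;> decide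
  · rcases hs with rfl | rfl
    · rw [cmod_small _ _ (by omega) (by omega)]; ring
    · rw [cmod_small _ _ (by omega) (by omega)]; ring

theorem cmod_same (q γ s : ℤ) (hq : q = 2 ∨ q % 2 = 1) (hq1 : 2 ≤ q) (h0 : 0 ≤ γ)
    (h : 2 * γ < q) (hs : s = -1 ∨ s = 1) :
    (q/2 - γ) ^ 2 ≤ cmod q (q/2 * s + γ * s) ^ 2 := by
  by_cases hg : γ = 0
  · subst hg
    have := cmod_opp q 0 s hq hq1 h0 h hs
    simp only [zero_mul] at this ⊢
    exact this.ge
  rcases hq with rfl | hq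
  · omega
  · rcases hs with rfl | rfl
    · rw [← cmod_addq, cmod_small _ _ (by omega) (by omega)]
      apply pow_le_pow_left₀ <;> omega
    · rw [← cmod_subq, cmod_small _ _ (by omega) (by omega), ← neg_sq (_ - q)]
      apply pow_le_pow_left₀ <;> omega

theorem alt_rot (ℓ : ℕ) (he : Even ℓ) (i : Fin ℓ) :
    (-1 : ℤ) ^ ((finRotate ℓ i : Fin ℓ) : ℕ) = -(-1 : ℤ) ^ (i : ℕ) := by
  cases ℓ with
  | zero => exact i.elim0
  | succ n =>
    by_cases hi : i = Fin.last n
    · subst hi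
      have : Odd n := by
        rcases Nat.even_or_odd n with h | h
        · exact absurd he (by simpa [Nat.even_add_one] using h)
        · exact h
      rw [finRotate_last]
      simp [this.neg_one_pow]
    · rw [coe_finRotate_of_ne_last hi, pow_succ]; ring

/-- for any full-weight `m_Δ ∈ {-1,1}^ℓ`, the toroidal norm of
`G m_Δ` is at least `√ℓ · (⌊q/2⌋ - γ)`, with equality for the alternating-sign
vector `m_Δ i = (-1)^i` (the signs alternate consistently since `ℓ` is even). -/
theorem stmt6 (q ℓ : ℕ) (hq : q.Prime) (hℓ : 2 ≤ ℓ)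
    (γ : ℤ) (hγ0 : 0 ≤ γ) (hγ : (γ : ℝ) < (q : ℝ) / 2) :
    (∀ mΔ : Fin ℓ → ℤ, (∀ i, mΔ i = -1 ∨ mΔ i = 1) →
      Real.sqrt ℓ * ((((q : ℤ) / 2 : ℤ) : ℝ) - (γ : ℝ))
        ≤ tdistI (q : ℤ) (minalEnc ℓ ((q : ℤ) / 2) γ mΔ) 0) ∧
    (Even ℓ →
      tdistI (q : ℤ) (minalEnc ℓ ((q : ℤ) / 2) γ (fun i => (-1 : ℤ) ^ (i : ℕ))) 0
        = Real.sqrt ℓ * ((((q : ℤ) / 2 : ℤ) : ℝ) - (γ : ℝ))) := by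
  have hq1 : (2:ℤ) ≤ q := by exact_mod_cast hq.two_le
  have hq2 : (q:ℤ) = 2 ∨ (q:ℤ) % 2 = 1 := by
    rcases hq.eq_two_or_odd with h | h <;> omega
  have hg : 2 * γ < (q:ℤ) := by
    have : (2:ℝ) * γ < q := by linarith
    exact_mod_cast this
  have hA : (0:ℝ) ≤ (((q : ℤ) / 2 : ℤ) : ℝ) - (γ : ℝ) := by
    have : γ ≤ (q:ℤ)/2 := by omega
    have : (γ:ℝ) ≤ (((q : ℤ) / 2 : ℤ) : ℝ) := by exact_mod_cast this
    linarith
  have key : Real.sqrt ℓ * ((((q : ℤ) / 2 : ℤ) : ℝ) - (γ : ℝ)) =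
      Real.sqrt (∑ _i : Fin ℓ, ((((q : ℤ) / 2 : ℤ) : ℝ) - (γ : ℝ)) ^ 2) := by
    rw [Finset.sum_const, Finset.card_univ, Fintype.card_fin, nsmul_eq_mul,
      Real.sqrt_mul (Nat.cast_nonneg _), Real.sqrt_sq hA]
  rw [key]
  constructor
  · intro m hm
    unfold tdistI minalEnc
    apply Real.sqrt_le_sqrt
    apply Finset.sum_le_sum
    intro i _
    simp only [Pi.zero_apply, sub_zero]
    have : ((q:ℤ)/2 - γ) ^ 2 ≤ cmod q ((q:ℤ)/2 * m i + γ * m (finRotate ℓ i)) ^ 2 := by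
      have h : m (finRotate ℓ i) = m i ∨ m (finRotate ℓ i) = - m i := by
        rcases hm i with h | h <;> rcases hm (finRotate ℓ i) with h' | h' <;> rw [h, h'] <;> decide
      rcases h with h | h <;> rw [h]
      · exact cmod_same _ _ _ hq2 hq1 hγ0 hg (hm i)
      · exact (cmod_opp _ _ _ hq2 hq1 hγ0 hg (hm i)).ge
    exact_mod_cast this
  · intro he
    unfold tdistI minalEnc
    congr 1
    apply Finset.sum_congr rfl
    intro i _
    simp only [Pi.zero_apply, sub_zero]
    rw [alt_rot ℓ he i]
    have := cmod_opp q γ ((-1) ^ (i:ℕ)) hq2 hq1 hγ0 hg (neg_one_pow_eq_or ℤ _).symm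
    exact_mod_cast this
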